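/- The centralized and normalized number of non-zero-blocks is asymptotically standard normal: for every real x, P(ξ_n ≤ E_n + x·√V_n) = Σ_{k : k ≤ E_n + x·√V_n} T_{n,k}/T_n converges, as n → ∞, to Φ(x) = (1/√(2π))·∫_{−∞}^{x} e^{−t²/2} dt, the cumulative distribution function of the standard normal distribution. -/

import Mathlib

open Filter MeasureTheory

def Tnk (m c : ℕ) : ℕ → ℕ → ℕ
  | 0, 0 => 1
  | 0, _ + 1 => 0
  | n + 1, 0 => c * Tnk m c n 0
  | n + 1, k + 1 => Tnk m c n k + (m * (k + 1) + c) * Tnk m c n (k + 1)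

def Ttot (m c n : ℕ) : ℕ := ∑ k ∈ Finset.range (n + 1), Tnk m c n k

/-- The expectation `E_n = (∑_k k·T_{n,k})/T_n`. -/
noncomputable def En (m c n : ℕ) : ℝ :=
  (∑ k ∈ Finset.range (n + 1), (k : ℝ) * Tnk m c n k) / Ttot m c n

/-- The variance `V_n = (∑_k k²·T_{n,k})/T_n − E_n²`. -/
noncomputable def Vn (m c n : ℕ) : ℝ :=
  (∑ k ∈ Finset.range (n + 1), (k : ℝ) ^ 2 * Tnk m c n k) / Ttot m c n -
    En m c n ^ 2


open Polynomial in
noncomputable def QQ (m c : ℕ) : ℕ → ℂ[X]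
  | 0 => 1
  | n + 1 => (X + C (c : ℂ)) * QQ m c n + C (m : ℂ) * (X * derivative (QQ m c n))

lemma QQ_coeff (m c n k : ℕ) : (QQ m c n).coeff k = (Tnk m c n k : ℂ) := by
  induction n generalizing k with
  | zero => cases k <;> simp [QQ, Tnk, Polynomial.coeff_one]
  | succ n ih =>
    cases k with
    | zero => simp [QQ, Tnk, add_mul, ih]
    | succ k =>
      simp only [QQ, Tnk, add_mul, Polynomial.coeff_add, Polynomial.coeff_X_mul,
        Polynomial.coeff_C_mul, Polynomial.coeff_derivative, ih]
      push_cast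
      ring

lemma Tnk_gt (m c n k : ℕ) (h : n < k) : Tnk m c n k = 0 := by
  induction n generalizing k with
  | zero => cases k with
    | zero => omega
    | succ k => rfl
  | succ n ih =>
    cases k with
    | zero => omega
    | succ k => simp [Tnk, ih k (by omega), ih (k+1) (by omega)]

lemma Tnk_self (m c n : ℕ) : Tnk m c n n = 1 := by
  induction n with
  | zero => rfl
  | succ n ih => simp [Tnk, ih, Tnk_gt m c n (n+1) (by omega)]

lemma Tnk_zero (m c n : ℕ) : Tnk m c n 0 = c ^ n := by
  induction n with
  | zero => rfl
  | succ n ih => simp [Tnk, ih, pow_succ, mul_comm]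

lemma QQ_natDegree_le (m c n : ℕ) : (QQ m c n).natDegree ≤ n := by
  rw [Polynomial.natDegree_le_iff_coeff_eq_zero]
  intro k hk
  rw [QQ_coeff, Tnk_gt m c n k hk, Nat.cast_zero]

lemma QQ_monic (m c n : ℕ) : (QQ m c n).Monic :=
  Polynomial.monic_of_natDegree_le_of_coeff_eq_one n (QQ_natDegree_le m c n)
    (by rw [QQ_coeff, Tnk_self, Nat.cast_one])

lemma QQ_eval (m c n : ℕ) (z : ℂ) :
    (QQ m c n).eval z = ∑ k ∈ Finset.range (n + 1), (Tnk m c n k : ℂ) * z ^ k := by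
  rw [Polynomial.eval_eq_sum_range' (Nat.lt_succ_of_le (QQ_natDegree_le m c n))]
  simp [QQ_coeff]

lemma Ttot_pos (m c n : ℕ) : 0 < Ttot m c n := by
  unfold Ttot
  refine Finset.sum_pos' (fun _ _ => Nat.zero_le _) ⟨n, by simp, by rw [Tnk_self]; norm_num⟩

lemma natCast_mul_im' (a : ℕ) (z : ℂ) : ((a : ℂ) * z).im = a * z.im := by
  simp [Complex.mul_im]

lemma QQ_roots_im (m c : ℕ) (hc : 0 < c) (n : ℕ) (z : ℂ) (hz : (QQ m c n).eval z = 0) :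
    z.im = 0 := by
  induction n generalizing z with
  | zero => simp [QQ] at hz
  | succ n ih =>
    by_contra him
    have hQ : (QQ m c n).eval z ≠ 0 := fun h => him (ih z h)
    have hz0 : z ≠ 0 := by rintro rfl; simp at him
    have hlog := (IsAlgClosed.splits (QQ m c n)).eval_derivative_div_eval_of_ne_zero hQ
    have h1 : (1 : ℂ) + c * z⁻¹ + m * ((QQ m c n).derivative.eval z / (QQ m c n).eval z) = 0 := by
      simp [QQ] at hz
      field_simp
      linear_combination hz
    rw [hlog] at h1
    have key : ∀ s : Multiset ℂ, (∀ a ∈ s, a.im = 0) →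
        ∃ u : ℝ, 0 ≤ u ∧ ((s.map fun a => 1 / (z - a)).sum).im = - z.im * u := by
      intro s
      induction s using Multiset.induction_on with
      | empty => intro _; exact ⟨0, le_rfl, by simp⟩
      | cons a s ihs =>
        intro h
        obtain ⟨u, hu, he⟩ := ihs (fun b hb => h b (Multiset.mem_cons_of_mem hb))
        have ha := h a (Multiset.mem_cons_self a s)
        refine ⟨u + (Complex.normSq (z - a))⁻¹,
          add_nonneg hu (inv_nonneg.2 (Complex.normSq_nonneg _)), ?_⟩
        rw [Multiset.map_cons, Multiset.sum_cons, Complex.add_im, he, one_div, Complex.inv_im]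
        simp [ha]
        ring
    obtain ⟨u, hu, he⟩ := key (QQ m c n).roots
      (fun a ha => ih a (Polynomial.isRoot_of_mem_roots ha))
    have h2 := congrArg Complex.im h1
    have hn : 0 < (Complex.normSq z)⁻¹ := inv_pos.2 (Complex.normSq_pos.2 hz0)
    rw [Complex.add_im, Complex.add_im, natCast_mul_im', natCast_mul_im', he,
      Complex.inv_im] at h2
    have h3 : z.im * (c * (Complex.normSq z)⁻¹ + m * u) = 0 := by
      simp at h2
      rw [div_eq_mul_inv] at h2
      linarith
    have hc' : (0 : ℝ) < c := by exact_mod_cast hc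
    have : 0 < c * (Complex.normSq z)⁻¹ + m * u := by positivity
    exact (mul_ne_zero him this.ne') h3

lemma QQ_roots_neg (m c : ℕ) (hc : 0 < c) (n : ℕ) (z : ℂ) (hz : (QQ m c n).eval z = 0) :
    z.im = 0 ∧ z.re < 0 := by
  have him := QQ_roots_im m c hc n z hz
  refine ⟨him, ?_⟩
  by_contra hre
  push Not at hre
  obtain ⟨x, rfl⟩ : ∃ x : ℝ, z = x := ⟨z.re, Complex.ext rfl (by simp [him])⟩
  simp at hre
  rw [QQ_eval] at hz
  have hz' : ∑ k ∈ Finset.range (n + 1), (Tnk m c n k : ℝ) * x ^ k = 0 := by exact_mod_cast hz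
  rw [Finset.sum_eq_zero_iff_of_nonneg (fun k _ => by positivity)] at hz'
  have := hz' 0 (by simp)
  simp [Tnk_zero] at this
  omega

open Polynomial in
lemma QQ_prod (m c : ℕ) (hc : 0 < c) (n : ℕ) : ∃ s : Multiset ℝ, (∀ r ∈ s, 0 < r) ∧
    QQ m c n = (s.map fun r : ℝ => (X + C (r : ℂ))).prod := by
  have hr := fun z (hz : z ∈ (QQ m c n).roots) => QQ_roots_neg m c hc n z
    (Polynomial.isRoot_of_mem_roots hz)
  refine ⟨(QQ m c n).roots.map (fun z => -z.re), ?_, ?_⟩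
  · intro r h
    obtain ⟨z, hz, rfl⟩ := Multiset.mem_map.1 h
    linarith [(hr z hz).2]
  · conv_lhs => rw [(IsAlgClosed.splits (QQ m c n)).eq_prod_roots_of_monic (QQ_monic m c n)]
    rw [Multiset.map_map]
    congr 1
    apply Multiset.map_congr rfl
    intro z hz
    have : ((z.re : ℝ) : ℂ) = z := Complex.ext rfl (by simp [(hr z hz).1])
    simp [this, sub_eq_add_neg]

open Polynomial in
lemma prod_mean (s : Multiset ℝ) (hs : ∀ r ∈ s, 0 < r) (F : ℂ[X])
    (hF : F = (s.map fun r : ℝ => (X + C (r : ℂ))).prod) :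
    F.derivative.eval 1 = F.eval 1 * (((s.map fun r => (1 + r)⁻¹).sum : ℝ) : ℂ) ∧
    (X * F.derivative).derivative.eval 1 = F.eval 1 *
      ((((s.map fun r => (1 + r)⁻¹ * (1 - (1 + r)⁻¹)).sum : ℝ) : ℂ) +
      (((s.map fun r => (1 + r)⁻¹).sum : ℝ) : ℂ) ^ 2) := by
  induction s using Multiset.induction_on generalizing F with
  | empty => subst hF; simp
  | cons r s ih =>
    obtain ⟨h1, h2⟩ := ih (fun b hb => hs b (Multiset.mem_cons_of_mem hb)) _ rfl
    have hr := hs r (Multiset.mem_cons_self r s)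
    have hr' : (1 : ℂ) + r ≠ 0 := by
      have : (1 : ℝ) + r ≠ 0 := by positivity
      exact_mod_cast this
    rw [Multiset.map_cons, Multiset.prod_cons] at hF
    set G := (s.map fun r : ℝ => (X + C (r : ℂ))).prod
    subst hF
    simp only [Multiset.map_cons, Multiset.sum_cons, Complex.ofReal_add, Complex.ofReal_mul,
      Complex.ofReal_sub, Complex.ofReal_inv, Complex.ofReal_one]
    simp [derivative_mul] at h1 h2 ⊢
    generalize ((s.map fun r => (1 + r)⁻¹).sum : ℝ) = A at *
    generalize ((s.map fun r => (1 + r)⁻¹ * (1 - (1 + r)⁻¹)).sum : ℝ) = B at *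
    constructor
    · rw [h1]; field_simp
    · have h3 := eq_sub_of_add_eq' h2
      rw [h3, h1]; field_simp; ring

lemma En_eq (m c n : ℕ) (s : Multiset ℝ) (hs : ∀ r ∈ s, 0 < r)
    (hF : QQ m c n = (s.map fun r : ℝ => (Polynomial.X + Polynomial.C (r : ℂ))).prod) :
    En m c n = (s.map fun r => (1 + r)⁻¹).sum ∧
    Vn m c n = (s.map fun r => (1 + r)⁻¹ * (1 - (1 + r)⁻¹)).sum := by
  obtain ⟨h1, h2⟩ := prod_mean s hs _ hF
  have hT : (QQ m c n).eval 1 = (Ttot m c n : ℂ) := by simp [QQ_eval, Ttot]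
  have hd : (QQ m c n).derivative.eval 1 = ((∑ k ∈ Finset.range (n + 1), (k : ℝ) * Tnk m c n k : ℝ) : ℂ) := by
    rw [Polynomial.derivative_eval, Polynomial.sum_over_range' _ _ (n+1) (Nat.lt_succ_of_le (QQ_natDegree_le m c n))]
    · simp [QQ_coeff, mul_comm]
    · simp
  have hd2 : (Polynomial.X * (QQ m c n).derivative).derivative.eval 1 =
      ((∑ k ∈ Finset.range (n + 1), (k : ℝ) ^ 2 * Tnk m c n k : ℝ) : ℂ) := by
    rw [Polynomial.derivative_eval, Polynomial.sum_over_range' _ (by simp) (n+1)]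
    · simp
      apply Finset.sum_congr rfl
      intro k _
      cases k with
      | zero => simp
      | succ k => simp [Polynomial.coeff_X_mul, Polynomial.coeff_derivative, QQ_coeff]; ring
    · refine Nat.lt_succ_of_le ?_
      rw [Polynomial.natDegree_le_iff_coeff_eq_zero]
      intro k hk
      cases k with
      | zero => simp
      | succ k => simp [Polynomial.coeff_X_mul, Polynomial.coeff_derivative, QQ_coeff, Tnk_gt m c n (k+1) hk]
  rw [hT, hd] at h1
  rw [hT, hd2] at h2
  have hp : (Ttot m c n : ℝ) ≠ 0 := by exact_mod_cast (Ttot_pos m c n).ne'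
  have h1' : (∑ k ∈ Finset.range (n + 1), (k : ℝ) * Tnk m c n k) = Ttot m c n * (s.map fun r => (1 + r)⁻¹).sum := by
    exact_mod_cast h1
  have h2' : (∑ k ∈ Finset.range (n + 1), (k : ℝ) ^ 2 * Tnk m c n k) = Ttot m c n *
     ((s.map fun r => (1 + r)⁻¹ * (1 - (1 + r)⁻¹)).sum + (s.map fun r => (1 + r)⁻¹).sum ^ 2) := by
    exact_mod_cast h2
  have hE : En m c n = (s.map fun r => (1 + r)⁻¹).sum := by
    rw [En, h1']; field_simp
  refine ⟨hE, ?_⟩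
  rw [Vn, hE, h2']; field_simp; ring

/-- characteristic function of a centred Bernoulli variable -/
noncomputable def bf (p s : ℝ) : ℂ :=
  (1 - p : ℝ) * Complex.exp ((-p * s : ℝ) * Complex.I) + p * Complex.exp (((1 - p) * s : ℝ) * Complex.I)

lemma bf_norm (p s : ℝ) (h0 : 0 ≤ p) (h1 : p ≤ 1) : ‖bf p s‖ ≤ 1 := by
  unfold bf
  refine (norm_add_le _ _).trans ?_
  rw [norm_mul, norm_mul, Complex.norm_exp_ofReal_mul_I, Complex.norm_exp_ofReal_mul_I,
    Complex.norm_real, Complex.norm_real, Real.norm_of_nonneg h0,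
    Real.norm_of_nonneg (sub_nonneg.2 h1)]
  linarith

lemma exp_taylor (x : ℝ) (hx : |x| ≤ 1) :
    ‖Complex.exp (x * Complex.I) - (1 + x * Complex.I - x ^ 2 / 2)‖ ≤ |x| ^ 3 / 4 := by
  have h := Complex.exp_bound (x := x * Complex.I) (by simpa using hx) (n := 3) (by norm_num)
  have e : ∑ k ∈ Finset.range 3, ((x : ℂ) * Complex.I) ^ k / (k.factorial : ℂ)
      = 1 + x * Complex.I - x ^ 2 / 2 := by
    simp [Finset.sum_range_succ, Nat.factorial, mul_pow]
    ring
  rw [e] at h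
  refine h.trans ?_
  have : (0:ℝ) ≤ |x| ^ 3 := by positivity
  simp [Nat.factorial]
  nlinarith

lemma bf_close (p s : ℝ) (h0 : 0 ≤ p) (h1 : p ≤ 1) (hs : |s| ≤ 1) :
    ‖bf p s - (Real.exp (-(p * (1 - p)) * s ^ 2 / 2) : ℝ)‖ ≤ p * (1 - p) * |s| ^ 3 := by
  have hq : 0 ≤ 1 - p := sub_nonneg.2 h1
  have ha : |(-p * s)| = p * |s| := by rw [abs_mul, abs_neg, abs_of_nonneg h0]
  have hb : |((1 - p) * s)| = (1 - p) * |s| := by rw [abs_mul, abs_of_nonneg hq]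
  have hs0 := abs_nonneg s
  have e1 := exp_taylor (-p * s) (by rw [ha]; nlinarith)
  have e2 := exp_taylor ((1 - p) * s) (by rw [hb]; nlinarith)
  rw [ha] at e1
  rw [hb] at e2
  have hpq : 0 ≤ p * (1 - p) := mul_nonneg h0 hq
  have hpq1 : p * (1 - p) ≤ 1 := by nlinarith
  have hs2 : s ^ 2 ≤ 1 := by rw [← sq_abs]; nlinarith
  have hv : |(-(p * (1 - p)) * s ^ 2 / 2)| ≤ 1 := by
    rw [abs_div, abs_mul, abs_neg, abs_of_nonneg hpq, abs_of_nonneg (sq_nonneg s)]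
    rw [abs_of_pos (by norm_num : (0:ℝ) < 2)]
    nlinarith [sq_nonneg s]
  have e3 := Real.abs_exp_sub_one_sub_id_le hv
  have e3' : ‖((1 + (-(p * (1 - p)) * s ^ 2 / 2) - Real.exp (-(p * (1 - p)) * s ^ 2 / 2) : ℝ) : ℂ)‖
      ≤ (-(p * (1 - p)) * s ^ 2 / 2) ^ 2 := by
    rw [Complex.norm_real, Real.norm_eq_abs, abs_sub_comm, ← sub_sub]
    exact e3
  set A := Complex.exp ((-p * s : ℝ) * Complex.I)
  set B := Complex.exp (((1 - p) * s : ℝ) * Complex.I)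
  have key : bf p s - (Real.exp (-(p * (1 - p)) * s ^ 2 / 2) : ℝ) =
      (1 - p : ℝ) * (A - (1 + (-p * s : ℝ) * Complex.I - ((-p * s : ℝ) : ℂ) ^ 2 / 2)) +
      (p : ℝ) * (B - (1 + ((1 - p) * s : ℝ) * Complex.I - (((1 - p) * s : ℝ) : ℂ) ^ 2 / 2)) +
      ((1 + (-(p * (1 - p)) * s ^ 2 / 2) - Real.exp (-(p * (1 - p)) * s ^ 2 / 2) : ℝ) : ℂ) := by
    rw [show bf p s = (1 - p : ℝ) * A + p * B from rfl]
    clear_value A B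
    push_cast
    ring
  rw [key]
  refine (norm_add₃_le).trans ?_
  rw [norm_mul, norm_mul, Complex.norm_real, Complex.norm_real, Real.norm_of_nonneg h0,
    Real.norm_of_nonneg hq]
  have f1 := mul_le_mul_of_nonneg_left e1 hq
  have f2 := mul_le_mul_of_nonneg_left e2 h0
  have hs4 : s ^ 4 ≤ |s| ^ 3 := by
    have : s ^ 4 = |s| ^ 4 := by rw [← abs_pow, abs_of_nonneg (by positivity)]
    rw [this]
    exact pow_le_pow_of_le_one hs0 hs (by norm_num)
  have f3 : (-(p * (1 - p)) * s ^ 2 / 2) ^ 2 ≤ p * (1 - p) * |s| ^ 3 / 4 := by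
    have : (-(p * (1 - p)) * s ^ 2 / 2) ^ 2 = (p * (1 - p)) * (p * (1 - p)) * s ^ 4 / 4 := by ring
    rw [this]
    have : (p * (1 - p)) * (p * (1 - p)) * s ^ 4 ≤ (p * (1 - p)) * 1 * |s| ^ 3 := by gcongr
    linarith
  have f4 : (1 - p) * ((p * |s|) ^ 3 / 4) + p * (((1 - p) * |s|) ^ 3 / 4) ≤ p * (1 - p) * |s| ^ 3 / 2 := by
    have : (1 - p) * ((p * |s|) ^ 3 / 4) + p * (((1 - p) * |s|) ^ 3 / 4) =
      p * (1 - p) * |s| ^ 3 * (p ^ 2 + (1 - p) ^ 2) / 4 := by ring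
    rw [this]
    have : 0 ≤ p * (1 - p) * |s| ^ 3 := by positivity
    nlinarith [mul_le_mul_of_nonneg_left (show p ^ 2 + (1 - p) ^ 2 ≤ 2 by nlinarith) this]
  have f5 : 0 ≤ p * (1 - p) * |s| ^ 3 := by positivity
  linarith

lemma bf_prod (S : Multiset ℝ) (hS : ∀ r ∈ S, 0 < r) (s : ℝ) (hs : |s| ≤ 1) :
    ‖(S.map fun r => bf (1 + r)⁻¹ s).prod -
      (Real.exp (-((S.map fun r => (1 + r)⁻¹ * (1 - (1 + r)⁻¹)).sum) * s ^ 2 / 2) : ℝ)‖ ≤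
      (S.map fun r => (1 + r)⁻¹ * (1 - (1 + r)⁻¹)).sum * |s| ^ 3 ∧
    0 ≤ (S.map fun r => (1 + r)⁻¹ * (1 - (1 + r)⁻¹)).sum := by
  induction S using Multiset.induction_on with
  | empty => simp
  | cons r S ih =>
    obtain ⟨ih, ih0⟩ := ih (fun b hb => hS b (Multiset.mem_cons_of_mem hb))
    have hr := hS r (Multiset.mem_cons_self r S)
    simp only [Multiset.map_cons, Multiset.sum_cons, Multiset.prod_cons]
    have hp0 : 0 ≤ (1 + r)⁻¹ := by positivity
    have hp1 : (1 + r)⁻¹ ≤ 1 := inv_le_one_of_one_le₀ (by linarith)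
    generalize (1 + r)⁻¹ = p at *
    generalize (S.map fun r => (1 + r)⁻¹ * (1 - (1 + r)⁻¹)).sum = V at *
    generalize (S.map fun r => bf (1 + r)⁻¹ s).prod = A at *
    have hpq := mul_nonneg hp0 (sub_nonneg.2 hp1)
    refine ⟨?_, by positivity⟩
    have e : (Real.exp (-(p * (1 - p) + V) * s ^ 2 / 2)) =
      Real.exp (-(p * (1 - p)) * s ^ 2 / 2) * Real.exp (-V * s ^ 2 / 2) := by
      rw [← Real.exp_add]; ring_nf
    have hc := bf_close p s hp0 hp1 hs
    have hE : ‖((Real.exp (-V * s ^ 2 / 2) : ℝ) : ℂ)‖ ≤ 1 := by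
      rw [Complex.norm_real, Real.norm_of_nonneg (Real.exp_nonneg _)]
      apply Real.exp_le_one_iff.2
      nlinarith [mul_nonneg ih0 (sq_nonneg s)]
    rw [e, Complex.ofReal_mul]
    set D := ((Real.exp (-V * s ^ 2 / 2) : ℝ) : ℂ)
    set B := ((Real.exp (-(p * (1 - p)) * s ^ 2 / 2) : ℝ) : ℂ)
    have : bf p s * A - B * D = bf p s * (A - D) + (bf p s - B) * D := by ring
    rw [this]
    refine (norm_add_le _ _).trans ?_
    rw [norm_mul, norm_mul]
    have g1 := mul_le_mul (bf_norm p s hp0 hp1) ih (norm_nonneg _) zero_le_one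
    have g2 := mul_le_mul hc hE (norm_nonneg _) (by positivity)
    linarith

lemma QQ_char (S : Multiset ℝ) (hS : ∀ r ∈ S, 0 < r) (s : ℝ) :
    (S.map fun r => bf (1 + r)⁻¹ s).prod *
     ((S.map fun r : ℝ => (Polynomial.X + Polynomial.C (r : ℂ))).prod).eval 1 =
    Complex.exp (-((S.map fun r => (1 + r)⁻¹).sum * s : ℝ) * Complex.I) *
     ((S.map fun r : ℝ => (Polynomial.X + Polynomial.C (r : ℂ))).prod).eval
      (Complex.exp (s * Complex.I)) := by
  induction S using Multiset.induction_on with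
  | empty => simp
  | cons r S ih =>
    have ih := ih (fun b hb => hS b (Multiset.mem_cons_of_mem hb))
    have hr := hS r (Multiset.mem_cons_self r S)
    simp only [Multiset.map_cons, Multiset.sum_cons, Multiset.prod_cons, Polynomial.eval_mul]
    have e : bf (1 + r)⁻¹ s * (1 + r) = Complex.exp (-((1 + r)⁻¹ * s : ℝ) * Complex.I) *
       (Complex.exp (s * Complex.I) + r) := by
      have hne : (1 + r : ℝ) ≠ 0 := by positivity
      have hne' : (1 + r : ℂ) ≠ 0 := by exact_mod_cast hne
      unfold bf
      have : Complex.exp (((1 - (1 + r)⁻¹) * s : ℝ) * Complex.I) =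
        Complex.exp (-((1 + r)⁻¹ * s : ℝ) * Complex.I) * Complex.exp (s * Complex.I) := by
        rw [← Complex.exp_add]; congr 1; push_cast; ring
      rw [this]
      have : ((-(1 + r)⁻¹ * s : ℝ) : ℂ) = -((1 + r)⁻¹ * s : ℝ) := by push_cast; ring
      rw [this]
      generalize Complex.exp (-((1 + r)⁻¹ * s : ℝ) * Complex.I) = Z
      push_cast
      field_simp
      ring
    have e2 : Complex.exp (-(((1 + r)⁻¹ + (S.map fun r => (1 + r)⁻¹).sum) * s : ℝ) * Complex.I) =
      Complex.exp (-((1 + r)⁻¹ * s : ℝ) * Complex.I) *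
      Complex.exp (-((S.map fun r => (1 + r)⁻¹).sum * s : ℝ) * Complex.I) := by
      rw [← Complex.exp_add]; congr 1; push_cast; ring
    rw [e2]
    simp only [Polynomial.eval_add, Polynomial.eval_X, Polynomial.eval_C]
    linear_combination (bf (1 + r)⁻¹ s * (1 + r)) * ih + (Complex.exp (-((S.map fun r => (1 + r)⁻¹).sum * s : ℝ) * Complex.I) *
     ((S.map fun r : ℝ => (Polynomial.X + Polynomial.C (r : ℂ))).prod).eval
      (Complex.exp (s * Complex.I))) * e

lemma char_close (m c : ℕ) (hc : 0 < c) (n : ℕ) (s : ℝ) (hs : |s| ≤ 1) :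
    ‖(∑ k ∈ Finset.range (n + 1), ((Tnk m c n k : ℝ) / Ttot m c n : ℝ) *
        Complex.exp (((k - En m c n) * s : ℝ) * Complex.I)) -
      (Real.exp (-Vn m c n * s ^ 2 / 2) : ℝ)‖ ≤ Vn m c n * |s| ^ 3 := by
  obtain ⟨S, hS, hF⟩ := QQ_prod m c hc n
  obtain ⟨hE, hV⟩ := En_eq m c n S hS hF
  have h := (bf_prod S hS s hs).1
  have hq := QQ_char S hS s
  rw [← hF, ← hE, QQ_eval, QQ_eval] at hq
  rw [← hV] at h
  have hp : (Ttot m c n : ℂ) ≠ 0 := by exact_mod_cast (Ttot_pos m c n).ne'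
  have : (S.map fun r => bf (1 + r)⁻¹ s).prod = ∑ k ∈ Finset.range (n + 1), ((Tnk m c n k : ℝ) / Ttot m c n : ℝ) *
        Complex.exp (((k - En m c n) * s : ℝ) * Complex.I) := by
    apply mul_right_cancel₀ hp
    have e1 : (Ttot m c n : ℂ) = ∑ k ∈ Finset.range (n + 1), (Tnk m c n k : ℂ) * 1 ^ k := by
      simp [Ttot]
    conv_lhs => rw [e1]
    rw [hq, Finset.mul_sum, Finset.sum_mul]
    apply Finset.sum_congr rfl
    intro k _
    have : Complex.exp (((k - En m c n) * s : ℝ) * Complex.I) =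
      Complex.exp (-(En m c n * s : ℝ) * Complex.I) * Complex.exp (s * Complex.I) ^ k := by
      rw [← Complex.exp_nat_mul, ← Complex.exp_add]; congr 1; push_cast; ring
    rw [this]
    push_cast
    field_simp
  rw [← this]
  exact h

lemma T_sum_succ (m c n : ℕ) (D : ℕ → ℝ) :
    ∑ k ∈ Finset.range (n + 1 + 1), (Tnk m c (n + 1) k : ℝ) * D k =
    ∑ k ∈ Finset.range (n + 1), (Tnk m c n k : ℝ) * (D (k + 1) + (m * k + c) * D k) := by
  have h : ∑ k ∈ Finset.range (n + 1 + 1), (m * k + c : ℝ) * Tnk m c n k * D k =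
      ∑ k ∈ Finset.range (n + 1), (m * k + c : ℝ) * Tnk m c n k * D k := by
    rw [Finset.sum_range_succ, Tnk_gt m c n (n+1) (by omega)]; simp
  rw [Finset.sum_range_succ'] at h ⊢
  simp only [mul_add, Finset.sum_add_distrib, Tnk] at h ⊢
  push_cast at h ⊢
  have e : ∑ k ∈ Finset.range (n + 1), (Tnk m c n k : ℝ) * ((m * k + c) * D k) =
     ∑ k ∈ Finset.range (n + 1), (m * k + c : ℝ) * Tnk m c n k * D k :=
    Finset.sum_congr rfl fun _ _ => by ring
  rw [e, ← h]
  simp only [add_mul, Finset.sum_add_distrib]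
  simp only [mul_add, add_mul, Finset.sum_add_distrib]
  simp
  ring

noncomputable def ww (m c n j : ℕ) : ℝ := (m * j + c : ℝ) ^ n * ((1 / m : ℝ) ^ j / j.factorial)

lemma pow_eq_desc (m c n j : ℕ) : (m * j + c : ℝ) ^ n =
    ∑ k ∈ Finset.range (n + 1), (Tnk m c n k : ℝ) * (m ^ k * j.descFactorial k) := by
  induction n with
  | zero => simp [Tnk]
  | succ n ih =>
    rw [T_sum_succ, pow_succ, ih, Finset.sum_mul]
    apply Finset.sum_congr rfl
    intro k _
    have : (j.descFactorial (k + 1) : ℝ) = (j - k) * j.descFactorial k := by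
      rw [Nat.descFactorial_succ]
      rcases le_or_gt k j with h | h
      · rw [Nat.cast_mul, Nat.cast_sub h]
      · rw [Nat.descFactorial_of_lt h]; simp
    rw [this, pow_succ]
    ring

lemma desc_hasSum (l : ℝ) (k : ℕ) :
    HasSum (fun j : ℕ => (j.descFactorial k : ℝ) * (l ^ j / j.factorial)) (l ^ k * Real.exp l) := by
  rw [← hasSum_nat_add_iff' k]
  have h0 : ∑ i ∈ Finset.range k, (i.descFactorial k : ℝ) * (l ^ i / i.factorial) = 0 := by
    apply Finset.sum_eq_zero
    intro i hi
    rw [Nat.descFactorial_of_lt (Finset.mem_range.1 hi)]; simp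
  rw [h0, sub_zero]
  have h : HasSum (fun j : ℕ => l ^ j / j.factorial) (Real.exp l) := by
    rw [Real.exp_eq_exp_ℝ]
    exact NormedSpace.expSeries_div_hasSum_exp l
  convert! h.mul_left (l ^ k) using 1
  funext j
  have e : (j.factorial : ℝ) * ((j + k).descFactorial k : ℝ) = (j + k).factorial := by
    have := Nat.factorial_mul_descFactorial (n := j + k) (k := k) (by omega)
    rw [Nat.add_sub_cancel] at this
    exact_mod_cast this
  have h1 : (j.factorial : ℝ) ≠ 0 := by positivity
  have h2 : ((j + k).factorial : ℝ) ≠ 0 := by positivity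
  field_simp
  rw [← e]; ring

lemma ww_hasSum (m c n : ℕ) (hm : 0 < m) :
    HasSum (ww m c n) (Real.exp (1 / m) * Ttot m c n) := by
  have hm' : (m : ℝ) ≠ 0 := by positivity
  have h := hasSum_sum (s := Finset.range (n + 1))
    (fun k _ => ((desc_hasSum (1 / m : ℝ) k).mul_left ((Tnk m c n k : ℝ) * m ^ k)))
  convert! h using 1
  · funext j
    rw [ww, pow_eq_desc, Finset.sum_mul]
    exact Finset.sum_congr rfl fun _ _ => by ring
  · rw [Ttot, Nat.cast_sum, Finset.mul_sum]
    refine Finset.sum_congr rfl fun k _ => ?_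
    rw [one_div, inv_pow]
    field_simp

lemma ww_var (m c n : ℕ) (hm : 0 < m) :
    HasSum (fun j : ℕ => ((m * j + c : ℝ) - (1 + c + m * En m c n)) ^ 2 * ww m c n j)
      ((m + m ^ 2 * Vn m c n) * (Real.exp (1 / m) * Ttot m c n)) := by
  have hT : (Ttot m c n : ℝ) ≠ 0 := by exact_mod_cast (Ttot_pos m c n).ne'
  have h0 := ww_hasSum m c n hm
  have h1 := ww_hasSum m c (n + 1) hm
  have h2 := ww_hasSum m c (n + 2) hm
  set a : ℝ := 1 + c + m * En m c n with ha
  have t0 : ∀ n, (Ttot m c n : ℝ) = ∑ k ∈ Finset.range (n + 1), (Tnk m c n k : ℝ) * (fun _ => 1) k := by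
    intro n; simp [Ttot]
  have eS1 : ∑ k ∈ Finset.range (n + 1), (k : ℝ) * Tnk m c n k = En m c n * Ttot m c n := by
    rw [En]; field_simp
  have eS2 : ∑ k ∈ Finset.range (n + 1), (k : ℝ) ^ 2 * Tnk m c n k = (Vn m c n + En m c n ^ 2) * Ttot m c n := by
    rw [Vn]; field_simp; ring
  have t1 : (Ttot m c (n + 1) : ℝ) = a * Ttot m c n := by
    rw [t0 (n + 1), T_sum_succ]
    have : ∀ k ∈ Finset.range (n + 1), (Tnk m c n k : ℝ) * (1 + (m * k + c) * 1) =
      (1 + c) * (Tnk m c n k : ℝ) + m * (k * Tnk m c n k) := fun _ _ => by ring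
    rw [Finset.sum_congr rfl this, Finset.sum_add_distrib, ← Finset.mul_sum, ← Finset.mul_sum, eS1]
    rw [← Nat.cast_sum, ← Ttot]; ring
  have t2 : (Ttot m c (n + 2) : ℝ) = (a ^ 2 + m + m ^ 2 * Vn m c n) * Ttot m c n := by
    rw [t0 (n + 2), T_sum_succ, T_sum_succ m c n (fun k => 1 + (m * k + c) * 1)]
    have : ∀ k ∈ Finset.range (n + 1), (Tnk m c n k : ℝ) *
      ((1 + (m * (k + 1 : ℕ) + c) * 1) + (m * k + c) * (1 + (m * k + c) * 1)) =
      ((1 + c) ^ 2 + m) * (Tnk m c n k : ℝ) + (2 * m * (1 + c)) * (k * Tnk m c n k)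
        + m ^ 2 * (k ^ 2 * Tnk m c n k) := fun _ _ => by push_cast; ring
    rw [Finset.sum_congr rfl this, Finset.sum_add_distrib, Finset.sum_add_distrib,
      ← Finset.mul_sum, ← Finset.mul_sum, ← Finset.mul_sum, eS1, eS2]
    rw [← Nat.cast_sum, ← Ttot, ha]; ring
  convert! (h2.sub (h1.mul_left (2 * a))).add (h0.mul_left (a ^ 2)) using 1
  · funext j
    simp only [ww]; ring
  · rw [t1, t2]; ring

lemma ww_pos (m c n j : ℕ) (hm : 0 < m) (hc : 0 < c) : 0 < ww m c n j := by
  have : (0 : ℝ) < c := by exact_mod_cast hc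
  have : (0 : ℝ) < m := by exact_mod_cast hm
  unfold ww
  positivity

lemma ww_max (m c n : ℕ) (hm : 0 < m) (hc : 0 < c) : ∃ j, ∀ i, ww m c n i ≤ ww m c n j := by
  have h := (ww_hasSum m c n hm).summable.tendsto_atTop_zero
  obtain ⟨N, hN⟩ := eventually_atTop.1 (h.eventually_lt_const (ww_pos m c n 0 hm hc))
  obtain ⟨j, _, hj⟩ := Finset.exists_max_image (Finset.range (N + 1)) (ww m c n) ⟨0, by simp⟩
  refine ⟨j, fun i => ?_⟩
  by_cases hi : i < N + 1
  · exact hj i (Finset.mem_range.2 hi)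
  · exact (hN i (by omega)).le.trans (hj 0 (by simp))

lemma ww_step (m c n j i : ℕ) (hm : 0 < m) :
    ww m c n (j + i) * (m ^ i * (j + i).factorial) * (m * j + c : ℝ) ^ n =
    ww m c n j * j.factorial * (m * j + c + m * i : ℝ) ^ n := by
  have hm' : (m : ℝ) ≠ 0 := by positivity
  have h1 : (j.factorial : ℝ) ≠ 0 := by positivity
  have h2 : ((j + i).factorial : ℝ) ≠ 0 := by positivity
  unfold ww
  rw [one_div, inv_pow, inv_pow, pow_add]
  push_cast
  field_simp
  ring

lemma fact_le (j i : ℕ) : (j + i).factorial ≤ j.factorial * (j + i) ^ i := by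
  induction i with
  | zero => simp
  | succ i ih =>
    rw [← add_assoc, Nat.factorial_succ, pow_succ]
    calc (j + i + 1) * (j + i).factorial ≤ (j + i + 1) * (j.factorial * (j + i) ^ i) := by gcongr
      _ ≤ (j + i + 1) * (j.factorial * (j + i + 1) ^ i) := by
          have := Nat.pow_le_pow_left (show j + i ≤ j + i + 1 by omega) i
          gcongr
      _ = _ := by ring

lemma x_large (m c : ℕ) (hm : 0 < m) (hc : 0 < c) (D : ℝ) (_hD : 0 < D) :
    ∀ᶠ n : ℕ in atTop, ∀ j, (∀ i, ww m c n i ≤ ww m c n j) → n * D ≤ (m * j + c : ℝ) ^ 2 := by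
  have hN := (tendsto_natCast_atTop_atTop (R := ℝ)).eventually_gt_atTop (216 * m * D ^ 2)
  filter_upwards [hN, eventually_ge_atTop 6] with n hn hn6 j hj
  by_contra! hcon
  have hm1 : (1 : ℝ) ≤ m := by exact_mod_cast hm
  have hc1 : (1 : ℝ) ≤ c := by exact_mod_cast hc
  have hj0 : (0 : ℝ) ≤ j := by positivity
  have hs := ww_step m c n j 1 hm
  have hwp := ww_pos m c n j hm hc
  have hle := hj (j + 1)
  set x : ℝ := m * j + c with hx
  have hx1 : j + 1 ≤ x := by nlinarith
  have hx0 : 0 < x := by linarith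
  have hA : (x + m) ^ n ≤ m * (j + 1) * x ^ n := by
    rw [Nat.factorial_succ] at hs
    have h1 : (j.factorial : ℝ) * ww m c n j * (x + m) ^ n ≤ (j.factorial : ℝ) * ww m c n j * (m * (j + 1) * x ^ n) := by
      calc (j.factorial : ℝ) * ww m c n j * (x + m) ^ n
          = ww m c n (j + 1) * (m * (j + 1) * j.factorial * x ^ n) := by
            push_cast at hs; rw [mul_one] at hs; linarith
        _ ≤ ww m c n j * (m * (j + 1) * j.factorial * x ^ n) := by gcongr
        _ = _ := by ring
    exact le_of_mul_le_mul_left h1 (by positivity)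
  have hB : (1 + 1 / x) ^ n ≤ m * x := by
    have h1 : (1 + 1 / x) ^ n ≤ ((x + m) / x) ^ n := by
      gcongr
      rw [add_div, div_self hx0.ne']
      gcongr
    refine h1.trans ?_
    rw [div_pow, div_le_iff₀ (by positivity)]
    refine hA.trans ?_
    gcongr
  have hC : ((n : ℝ) / 6 / x) ^ 3 ≤ (1 + 1 / x) ^ n := by
    have hk : (n : ℝ) / 6 ≤ ((n / 3 : ℕ) : ℝ) := by
      rw [div_le_iff₀ (by norm_num)]
      have : n ≤ (n / 3) * 6 := by omega
      exact_mod_cast this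
    have hb := one_add_mul_le_pow (a := 1 / x) (by have : 0 < 1 / x := by positivity
                                                   linarith) (n / 3)
    calc ((n : ℝ) / 6 / x) ^ 3 ≤ ((1 + 1 / x) ^ (n / 3)) ^ 3 := by
          gcongr
          refine le_trans ?_ hb
          rw [div_eq_mul_one_div ((n:ℝ) / 6)]
          have : (n : ℝ) / 6 * (1 / x) ≤ ((n / 3 : ℕ) : ℝ) * (1 / x) := by gcongr
          linarith
      _ = (1 + 1 / x) ^ (n / 3 * 3) := by rw [pow_mul]
      _ ≤ _ := pow_le_pow_right₀ (by have : 0 < 1 / x := by positivity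
                                     linarith) (by omega)
  have hE := hC.trans hB
  rw [div_pow, div_pow, div_div, div_le_iff₀ (by positivity)] at hE
  have hn0 : (0 : ℝ) < n := by exact_mod_cast (by omega : 0 < n)
  have h4 : x ^ 2 * x ^ 2 < (n * D) * (n * D) := mul_lt_mul'' hcon hcon (by positivity) (by positivity)
  have h5 : (n : ℝ) ^ 3 ≤ 216 * m * D ^ 2 * n ^ 2 := by
    calc (n : ℝ) ^ 3 ≤ 216 * m * (x ^ 2 * x ^ 2) := by nlinarith
      _ ≤ 216 * m * ((n * D) * (n * D)) := by gcongr
      _ = _ := by ring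
  have h6 : 216 * m * D ^ 2 * (n : ℝ) ^ 2 < n * n ^ 2 := by gcongr
  nlinarith

set_option maxHeartbeats 1000000 in
lemma ww_window (m c : ℕ) (hm : 0 < m) (hc : 0 < c) (L : ℕ) :
    ∀ᶠ n : ℕ in atTop, ∃ j, (∀ i, ww m c n i ≤ ww m c n j) ∧
      ∀ i ≤ L, ww m c n j / 2 ≤ ww m c n (j + i) := by
  have hm1 : (1 : ℝ) ≤ m := by exact_mod_cast hm
  have hc1 : (1 : ℝ) ≤ c := by exact_mod_cast hc
  have hN := (tendsto_natCast_atTop_atTop (R := ℝ)).eventually_gt_atTop (((m : ℝ) * (4 * L ^ 2 + 1) + c) ^ 2)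
  filter_upwards [hN, x_large m c hm hc (4 * L ^ 2 * m ^ 2 + 1) (by positivity)] with n hn hx
  obtain ⟨j, hj⟩ := ww_max m c n hm hc
  refine ⟨j, hj, fun i hi => ?_⟩
  specialize hx j hj
  have hj1 : (4 * L ^ 2 + 1 : ℝ) ≤ j := by
    by_contra! hcon
    have h1 : ((m : ℝ) * j + c) ^ 2 ≤ (m * (4 * L ^ 2 + 1) + c) ^ 2 := by gcongr
    have h2 : (n : ℝ) * 1 ≤ n * (4 * L ^ 2 * m ^ 2 + 1) := by
      gcongr
      have : (0:ℝ) ≤ 4 * L ^ 2 * m ^ 2 := by positivity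
      linarith
    linarith
  have hiL : (i : ℝ) ≤ L := by exact_mod_cast hi
  have hi2 : (i : ℝ) ^ 2 ≤ L ^ 2 := by gcongr
  have hjpos : 0 < j := by
    have : (0:ℝ) < j := by nlinarith [sq_nonneg (L : ℝ)]
    exact_mod_cast this
  obtain ⟨j', rfl⟩ : ∃ j', j = j' + 1 := ⟨j - 1, by omega⟩
  have hwp := ww_pos m c n (j' + 1) hm hc
  have hs1 := ww_step m c n j' 1 hm
  have hs := ww_step m c n (j' + 1) i hm
  have hle := hj j'
  have hf : (((j' + 1 + i).factorial : ℕ) : ℝ) ≤ (j' + 1).factorial * ((j' + 1 : ℕ) + i : ℝ) ^ i := by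
    exact_mod_cast fact_le (j' + 1) i
  have hsf : ((j' + 1).factorial : ℝ) = ((j' + 1 : ℕ) : ℝ) * j'.factorial := by
    rw [Nat.factorial_succ]; push_cast; ring
  have hxm : (m * j' + c : ℝ) = m * (j' + 1 : ℕ) + c - m := by push_cast; ring
  rw [hxm, hsf] at hs1
  generalize hJ : j' + 1 = j at *
  have hF : (0 : ℝ) < j.factorial := by positivity
  have hF' : (0 : ℝ) < j'.factorial := by positivity
  set x : ℝ := m * j + c with hxd
  have hj0 : (0 : ℝ) < j := by exact_mod_cast hjpos
  have hxmm : (m : ℝ) ≤ x := by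
    have : (1 : ℝ) ≤ j := by exact_mod_cast hjpos
    nlinarith
  have hx0 : 0 < x := by linarith
  have hB : (x - m) ^ n * (m * j) ≤ x ^ n := by
    have h1 : (ww m c n j * j'.factorial) * ((x - m) ^ n * (m * j)) ≤ (ww m c n j * j'.factorial) * x ^ n := by
      calc (ww m c n j * j'.factorial) * ((x - m) ^ n * (m * j)) = ww m c n j' * j'.factorial * x ^ n := by
            simp only [pow_one, Nat.cast_one, mul_one, sub_add_cancel] at hs1
            rw [← hs1]; ring
        _ ≤ _ := by gcongr
    exact le_of_mul_le_mul_left h1 (by positivity)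
  have hB' : ((1 - m / x) ^ i) ^ n * (m * j) ^ i ≤ 1 := by
    have : (1 - m / x) ^ n * (m * j) ≤ 1 := by
      have e : (1 - m / x) = (x - m) / x := by field_simp
      rw [e, div_pow, div_mul_eq_mul_div, div_le_one (by positivity)]
      exact hB
    have h0 : 0 ≤ 1 - m / x := by rw [sub_nonneg, div_le_one hx0]; exact hxmm
    calc ((1 - m / x) ^ i) ^ n * (m * j) ^ i = ((1 - m / x) ^ n * (m * j)) ^ i := by
          rw [← pow_mul, mul_comm i n, pow_mul, ← mul_pow]
      _ ≤ 1 := pow_le_one₀ (by positivity) this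
  have hA : ww m c n j * (1 + i * (m / x)) ^ n ≤ ww m c n (j + i) * (m * (j + i)) ^ i := by
    have e : (1 + i * (m / x)) = (x + m * i) / x := by field_simp
    rw [e, div_pow, mul_div_assoc', div_le_iff₀ (by positivity)]
    have hwi := ww_pos m c n (j + i) hm hc
    have : j.factorial * (ww m c n j * (x + m * i) ^ n) ≤
       j.factorial * (ww m c n (j + i) * (m * (j + i)) ^ i * x ^ n) := by
      calc j.factorial * (ww m c n j * (x + m * i) ^ n) =
          ww m c n (j + i) * (m ^ i * (j + i).factorial) * x ^ n := by rw [hs]; ring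
        _ ≤ ww m c n (j + i) * (m ^ i * (j.factorial * (j + i) ^ i)) * x ^ n := by gcongr
        _ = _ := by rw [mul_pow]; ring
    exact le_of_mul_le_mul_left this hF
  have hu0 : 0 ≤ m / x := by positivity
  have hu1 : m / x ≤ 1 := by rw [div_le_one hx0]; exact hxmm
  have hu2 : n * ((i : ℝ) ^ 2 * (m / x) ^ 2) ≤ 1 / 4 := by
    rw [div_pow, ← mul_div_assoc, ← mul_div_assoc, div_le_iff₀ (by positivity)]
    have h1 : (n : ℝ) * (i ^ 2 * m ^ 2) ≤ n * (L ^ 2 * m ^ 2) := by gcongr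
    have : (0 : ℝ) ≤ n := by positivity
    linarith
  generalize m / x = u at *
  have hn1 : (1 : ℝ) ≤ n := by
    have h0 : (0 : ℝ) < n := lt_of_le_of_lt (sq_nonneg _) hn
    exact_mod_cast h0
  have hiu : (i : ℝ) ^ 2 * u ^ 2 ≤ 1 / 4 := by
    have : 0 ≤ (i : ℝ) ^ 2 * u ^ 2 := by positivity
    exact (le_mul_of_one_le_left this hn1).trans hu2
  have hC : 3 / 4 ≤ ((1 + i * u) * (1 - u) ^ i) ^ n := by
    have hb := one_add_mul_le_pow (a := -u) (by linarith) i
    have h1 : 1 + -((i : ℝ) ^ 2 * u ^ 2) ≤ (1 + i * u) * (1 - u) ^ i := by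
      calc 1 + -((i : ℝ) ^ 2 * u ^ 2) = (1 + i * u) * (1 + i * -u) := by ring
        _ ≤ (1 + i * u) * (1 + -u) ^ i := by gcongr
        _ = _ := by rw [← sub_eq_add_neg]
    have h2 := one_add_mul_le_pow (a := -((i : ℝ) ^ 2 * u ^ 2)) (by linarith) n
    calc (3 / 4 : ℝ) ≤ 1 + n * -((i : ℝ) ^ 2 * u ^ 2) := by linarith
      _ ≤ _ := h2
      _ ≤ _ := by
        apply pow_le_pow_left₀ _ h1
        linarith
  have hG : 3 / 4 ≤ ((j : ℝ) / (j + i)) ^ i := by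
    have e : (j : ℝ) / (j + i) = 1 + -(i / (j + i)) := by field_simp; ring
    have h1 : (i : ℝ) / (j + i) ≤ 1 := by
      rw [div_le_one (by positivity)]; linarith
    have h2 := one_add_mul_le_pow (a := -((i : ℝ) / (j + i))) (by linarith) i
    rw [e]
    refine le_trans ?_ h2
    have : (i : ℝ) * (i / (j + i)) ≤ 1 / 4 := by
      rw [← mul_div_assoc, div_le_iff₀ (by positivity)]
      nlinarith [(Nat.cast_nonneg i : (0:ℝ) ≤ i)]
    linarith
  have hji : (0 : ℝ) < (m * (j + i)) ^ i := by positivity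
  have hwi := ww_pos m c n (j + i) hm hc
  calc ww m c n j / 2 ≤ ww m c n j * ((3 / 4) * (3 / 4)) := by linarith
    _ ≤ ww m c n j * (((1 + i * u) * (1 - u) ^ i) ^ n * ((j : ℝ) / (j + i)) ^ i) := by gcongr
    _ = (ww m c n j * (1 + i * u) ^ n) * (((1 - u) ^ i) ^ n * ((j : ℝ) / (j + i)) ^ i) := by
      rw [mul_pow]; ring
    _ ≤ (ww m c n (j + i) * (m * (j + i)) ^ i) * (((1 - u) ^ i) ^ n * ((j : ℝ) / (j + i)) ^ i) := by
      have : 0 ≤ 1 - u := by linarith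
      gcongr
    _ = ww m c n (j + i) * (((1 - u) ^ i) ^ n * (m * j) ^ i) := by
      rw [div_pow, mul_pow, mul_pow]; field_simp
    _ ≤ ww m c n (j + i) * 1 := by gcongr
    _ = _ := mul_one _

lemma Vn_tendsto (m c : ℕ) (hm : 0 < m) (hc : 0 < c) : Tendsto (Vn m c) atTop atTop := by
  have hm1 : (1 : ℝ) ≤ m := by exact_mod_cast hm
  have key : ∀ R : ℕ, ∀ᶠ n in atTop, (R : ℝ) ^ 2 / 2 ≤ m + m ^ 2 * Vn m c n := by
    intro R
    filter_upwards [ww_window m c hm hc (4 * (2 * R + 1))] with n hn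
    obtain ⟨j, hj, hwin⟩ := hn
    have h0 := ww_hasSum m c n hm
    have hv := ww_var m c n hm
    set M := Real.exp (1 / m) * Ttot m c n with hM
    set W := ww m c n j with hW
    have hMpos : 0 < M := by
      have : (0:ℝ) < Ttot m c n := by exact_mod_cast Ttot_pos m c n
      positivity
    have hML : (2 * R + 1) * W ≤ M / 2 := by
      have h1 : ∑ i ∈ (Finset.range (4 * (2 * R + 1))).map (addLeftEmbedding j), ww m c n i ≤ M :=
        sum_le_hasSum _ (fun i _ => (ww_pos m c n i hm hc).le) h0
      rw [Finset.sum_map] at h1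
      have h2 : (Finset.range (4 * (2 * R + 1))).card • (W / 2) ≤
          ∑ i ∈ Finset.range (4 * (2 * R + 1)), ww m c n (addLeftEmbedding j i) := by
        apply Finset.card_nsmul_le_sum
        intro i hi
        exact hwin i (Finset.mem_range.1 hi).le
      rw [Finset.card_range, nsmul_eq_mul] at h2
      push_cast at h2
      linarith
    set b : ℝ := (1 + m * En m c n) / m with hb
    set F := Finset.Icc (⌊b⌋₊ - R) (⌊b⌋₊ + R) with hFd
    have hFs : ∑ i ∈ F, ww m c n i ≤ (2 * R + 1) * W := by
      have h1 := Finset.sum_le_card_nsmul F (ww m c n) W (fun i _ => hj i)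
      have h2 : (F.card : ℝ) ≤ 2 * R + 1 := by
        have : F.card ≤ 2 * R + 1 := by rw [hFd, Nat.card_Icc]; omega
        exact_mod_cast this
      rw [nsmul_eq_mul] at h1
      have hWp := ww_pos m c n j hm hc
      exact h1.trans (by gcongr)
    have hsF : HasSum (fun i => if i ∈ F then ww m c n i else 0) (∑ i ∈ F, ww m c n i) := by
      have := hasSum_sum_of_ne_finset_zero (L := SummationFilter.unconditional ℕ) (f := fun i => if i ∈ F then ww m c n i else 0) (s := F)
        (fun i hi => by simp [hi])
      convert! this using 1
      exact Finset.sum_congr rfl fun i hi => by simp [hi]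
    have hcomp := hasSum_le (fun i => ?_) ((h0.sub hsF).mul_left ((R : ℝ) ^ 2)) hv
    · have hR : (0:ℝ) ≤ (R : ℝ) ^ 2 := by positivity
      have h3 : (R : ℝ) ^ 2 * (M / 2) ≤ (R : ℝ) ^ 2 * (M - ∑ i ∈ F, ww m c n i) := by
        gcongr; linarith
      have h4 : (R : ℝ) ^ 2 / 2 * M ≤ (m + m ^ 2 * Vn m c n) * M := by linarith
      exact le_of_mul_le_mul_right h4 hMpos
    · have hwi := ww_pos m c n i hm hc
      by_cases hi : i ∈ F
      · simp only [hi, if_true, sub_self, mul_zero]; positivity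
      · simp only [hi, if_false, sub_zero]
        have e : ((m * i + c : ℝ) - (1 + c + m * En m c n)) = m * (i - b) := by
          rw [hb]; field_simp; ring
        have hR : (R : ℝ) ^ 2 ≤ (i - b) ^ 2 := by
          rw [hFd, Finset.mem_Icc, not_and_or, not_le, not_le] at hi
          rcases hi with hi | hi
          · have h1 : i + R < ⌊b⌋₊ := by omega
            have h2 : (⌊b⌋₊ : ℝ) ≤ b := by
              apply Nat.floor_le
              by_contra! hneg
              rw [Nat.floor_of_nonpos hneg.le] at h1
              omega
            have h3 : (i + R : ℝ) < ⌊b⌋₊ := by exact_mod_cast h1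
            have : (0:ℝ) ≤ R := by positivity
            nlinarith
          · have h2 := Nat.lt_floor_add_one b
            have h3 : (⌊b⌋₊ + R + 1 : ℝ) ≤ i := by exact_mod_cast hi
            have : (0:ℝ) ≤ R := by positivity
            nlinarith
        rw [e]
        refine mul_le_mul_of_nonneg_right (hR.trans ?_) hwi.le
        rw [mul_pow]
        exact le_mul_of_one_le_left (sq_nonneg _) (one_le_pow₀ hm1)
  rw [tendsto_atTop]
  intro K
  obtain ⟨R, hR⟩ := exists_nat_ge (2 * (m + m ^ 2 * |K|) + 1)
  filter_upwards [key R] with n hn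
  have hR1 : (1 : ℝ) ≤ R := by
    have : 0 ≤ 2 * (m + m ^ 2 * |K|) := by positivity
    linarith
  have : m + m ^ 2 * |K| ≤ m + (m : ℝ) ^ 2 * Vn m c n := by nlinarith
  have h2 : (m : ℝ) ^ 2 * |K| ≤ (m : ℝ) ^ 2 * Vn m c n := by linarith
  exact (le_abs_self K).trans (le_of_mul_le_mul_left h2 (by positivity))

/-- law of the normalised variable -/
noncomputable def lawM (m c n : ℕ) : Measure ℝ :=
  ∑ k ∈ Finset.range (n + 1), ENNReal.ofReal ((Tnk m c n k : ℝ) / Ttot m c n) •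
    Measure.dirac ((k - En m c n) * (Real.sqrt (Vn m c n))⁻¹)

lemma lawM_apply (m c n : ℕ) (A : Set ℝ) (hA : MeasurableSet A) [DecidablePred (· ∈ A)] :
    lawM m c n A = ENNReal.ofReal (∑ k ∈ (Finset.range (n + 1)).filter
      (fun k : ℕ => (k - En m c n) * (Real.sqrt (Vn m c n))⁻¹ ∈ A), (Tnk m c n k : ℝ) / Ttot m c n) := by
  rw [lawM, Measure.finsetSum_apply, Finset.sum_filter, ENNReal.ofReal_sum_of_nonneg]
  · apply Finset.sum_congr rfl
    intro k _
    rw [Measure.smul_apply, Measure.dirac_apply' _ hA, Set.indicator_apply]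
    split_ifs <;> simp
  · intro k _
    split_ifs <;> positivity

instance lawM_prob (m c n : ℕ) : IsProbabilityMeasure (lawM m c n) := by
  classical
  refine ⟨?_⟩
  rw [lawM_apply m c n _ MeasurableSet.univ]
  have hT : (Ttot m c n : ℝ) ≠ 0 := by exact_mod_cast (Ttot_pos m c n).ne'
  simp only [Set.mem_univ, Finset.filter_true]
  rw [← Finset.sum_div, ← Nat.cast_sum, ← Ttot, div_self hT, ENNReal.ofReal_one]

lemma lawM_charFun (m c n : ℕ) (t : ℝ) : charFun (lawM m c n) t =
    ∑ k ∈ Finset.range (n + 1), ((Tnk m c n k : ℝ) / Ttot m c n : ℝ) *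
        Complex.exp (((k - En m c n) * (t * (Real.sqrt (Vn m c n))⁻¹) : ℝ) * Complex.I) := by
  rw [charFun_apply_real, lawM, integral_finsetSum_measure]
  · apply Finset.sum_congr rfl
    intro k _
    rw [integral_smul_measure, integral_dirac, ENNReal.toReal_ofReal (by positivity),
      Complex.real_smul]
    congr 3
    push_cast
    ring
  · intro k _
    apply Integrable.smul_measure _ ENNReal.ofReal_ne_top
    exact integrable_dirac (by simp)

lemma lawM_tendsto (m c : ℕ) (hm : 0 < m) (hc : 0 < c) (t : ℝ) :
    Tendsto (fun n => charFun (lawM m c n) t) atTop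
      (nhds (charFun (ProbabilityTheory.gaussianReal 0 1) t)) := by
  have hV := Vn_tendsto m c hm hc
  have hs : Tendsto (fun n => (Real.sqrt (Vn m c n))⁻¹) atTop (nhds 0) :=
    (Real.tendsto_sqrt_atTop.comp hV).inv_tendsto_atTop
  have hs1 : Tendsto (fun n => |t * (Real.sqrt (Vn m c n))⁻¹|) atTop (nhds 0) := by
    have := (hs.const_mul t).abs
    simpa using this
  have hb : Tendsto (fun n => |t| ^ 3 * (Real.sqrt (Vn m c n))⁻¹) atTop (nhds 0) := by
    simpa using hs.const_mul (|t| ^ 3)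
  rw [tendsto_iff_norm_sub_tendsto_zero]
  refine squeeze_zero' (Eventually.of_forall fun _ => norm_nonneg _) ?_ hb
  filter_upwards [hs1.eventually_le_const (zero_lt_one), hV.eventually_gt_atTop 0] with n h1 h2
  have h := char_close m c hc n _ h1
  rw [← lawM_charFun] at h
  have hq : 0 < Real.sqrt (Vn m c n) := Real.sqrt_pos.2 h2
  have hsq : Real.sqrt (Vn m c n) ^ 2 = Vn m c n := Real.sq_sqrt h2.le
  generalize Real.sqrt (Vn m c n) = q at *
  have e1 : -Vn m c n * (t * q⁻¹) ^ 2 / 2 = - t ^ 2 / 2 := by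
    rw [← hsq]; field_simp
  have e2 : Vn m c n * |t * q⁻¹| ^ 3 = |t| ^ 3 * q⁻¹ := by
    rw [← hsq, abs_mul, abs_of_pos (inv_pos.2 hq)]; field_simp
  rw [e1, e2] at h
  rw [ProbabilityTheory.charFun_gaussianReal]
  have e3 : Complex.exp (t * (0 : ℝ) * Complex.I - (1 : NNReal) * t ^ 2 / 2) =
      ((Real.exp (-t ^ 2 / 2) : ℝ) : ℂ) := by
    rw [Complex.ofReal_exp]
    congr 1
    simp
    ring
  rw [e3]
  exact h

/-- Asymptotic normality: for every real `x`,
`P(ξ_n ≤ E_n + x·√V_n) = ∑_{k ≤ E_n + x·√V_n} T_{n,k}/T_n` converges to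
`Φ(x) = (2π)^{-1/2} ∫_{-∞}^x e^{-t²/2} dt` as `n → ∞`. -/
theorem stmt_19 (m c : ℕ) (hm : 0 < m) (hc : 0 < c) (x : ℝ) :
    Tendsto
      (fun n : ℕ =>
        ∑ k ∈ (Finset.range (n + 1)).filter
            (fun k : ℕ => (k : ℝ) ≤ En m c n + x * Real.sqrt (Vn m c n)),
          (Tnk m c n k : ℝ) / Ttot m c n)
      atTop
      (nhds ((Real.sqrt (2 * Real.pi))⁻¹ * ∫ t in Set.Iic x, Real.exp (-t ^ 2 / 2))) := by
  classical
  let μs : ℕ → ProbabilityMeasure ℝ := fun n => ⟨lawM m c n, lawM_prob m c n⟩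
  let μ₀ : ProbabilityMeasure ℝ := ⟨ProbabilityTheory.gaussianReal 0 1, inferInstance⟩
  have hP : Tendsto μs atTop (nhds μ₀) :=
    ProbabilityMeasure.tendsto_of_tendsto_charFun (lawM_tendsto m c hm hc)
  have hna : NullSingletonClass (ProbabilityTheory.gaussianReal 0 1) :=
    ProbabilityTheory.nullSingletonClass_gaussianReal one_ne_zero
  have hI := ProbabilityMeasure.tendsto_measure_of_null_frontier_of_tendsto' hP (E := Set.Iic x)
    (by simp only [μ₀, ProbabilityMeasure.coe_mk, frontier_Iic]; exact measure_singleton x)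
  have hR := (ENNReal.tendsto_toReal (measure_ne_top _ _)).comp hI
  have hlim : (ProbabilityTheory.gaussianReal 0 1 (Set.Iic x)).toReal =
      (Real.sqrt (2 * Real.pi))⁻¹ * ∫ t in Set.Iic x, Real.exp (-t ^ 2 / 2) := by
    rw [ProbabilityTheory.gaussianReal_apply_eq_integral _ one_ne_zero,
      ENNReal.toReal_ofReal (integral_nonneg fun t => ProbabilityTheory.gaussianPDFReal_nonneg _ _ _),
      ← integral_const_mul]
    simp [ProbabilityTheory.gaussianPDFReal]
  simp only [μs, μ₀, ProbabilityMeasure.coe_mk] at hR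
  rw [hlim] at hR
  refine hR.congr' ?_
  filter_upwards [(Vn_tendsto m c hm hc).eventually_gt_atTop 0] with n hn
  have hq : 0 < Real.sqrt (Vn m c n) := Real.sqrt_pos.2 hn
  simp only [Function.comp_apply]
  rw [lawM_apply m c n _ measurableSet_Iic,
    ENNReal.toReal_ofReal (Finset.sum_nonneg fun _ _ => by positivity)]
  apply Finset.sum_congr _ (fun _ _ => rfl)
  apply Finset.filter_congr
  intro k _
  rw [Set.mem_Iic, ← div_eq_mul_inv, div_le_iff₀ hq, sub_le_iff_le_add']
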